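/- Let f : 𝔻 → E be holomorphic with f(z) ≠ 0 and Π(z) the orthogonal projection onto span{f(z)}. Then the squared operator norm of ∂Π(z) equals (‖f‖²‖f'‖² − |⟨f', f⟩|²)/‖f‖⁴. -/

import Mathlib

open Complex
open scoped InnerProductSpace

/-- Wirtinger derivative `∂ = ½(∂/∂x − i·∂/∂y)`. -/
noncomputable def wD {F : Type*} [NormedAddCommGroup F] [NormedSpace ℂ F]
    (f : ℂ → F) (z : ℂ) : F :=
  (2:ℂ)⁻¹ • (fderiv ℝ f z 1 - Complex.I • fderiv ℝ f z Complex.I)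

/-!
Write `f*` for the functional `⟪f, ·⟫`, so that `Π = (f*f)⁻¹ f f*`. Since `f` is holomorphic, `f*`
is antiholomorphic, that is, `∂f* = 0`. Hence `∂Π = ∂((f*f)⁻¹ f) f*`, and
`∂((f*f)⁻¹ f) = (f*f)⁻¹ (f' - (f*f)⁻¹ (f*f') f) = (f*f)⁻¹ (1 - Π) f'`. So `∂Π` has rank one, its
norm is the product of the norms of its two factors, and Pythagoras gives `‖(1 - Π) f'‖`.
-/

section Wirtinger

variable {E F G : Type*} [NormedAddCommGroup E] [NormedSpace ℂ E]
  [NormedAddCommGroup F] [NormedSpace ℂ F] [NormedAddCommGroup G] [NormedSpace ℂ G]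
  {z : ℂ}

theorem wD_comp {h : E → F} {φ : ℂ → E} (hh : DifferentiableAt ℂ h (φ z))
    (hφ : DifferentiableAt ℝ φ z) :
    wD (fun w ↦ h (φ w)) z = fderiv ℂ h (φ z) (wD φ z) := by
  have hfderiv : fderiv ℝ (fun w ↦ h (φ w)) z =
      ((fderiv ℂ h (φ z)).restrictScalars ℝ).comp (fderiv ℝ φ z) :=
    ((hh.hasFDerivAt.restrictScalars ℝ).comp z hφ.hasFDerivAt).fderiv
  simp [wD, hfderiv]

theorem wD_inv {φ : ℂ → ℂ} (hφ : DifferentiableAt ℝ φ z) (h0 : φ z ≠ 0) :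
    wD (fun w ↦ (φ w)⁻¹) z = -wD φ z / φ z ^ 2 := by
  rw [wD_comp (differentiableAt_inv h0) hφ, fderiv_inv]
  simp [div_eq_mul_inv]

theorem wD_of_bilinear (B : E →L[ℂ] F →L[ℂ] G) {f : ℂ → E} {g : ℂ → F}
    (hf : DifferentiableAt ℝ f z) (hg : DifferentiableAt ℝ g z) :
    wD (fun w ↦ B (f w) (g w)) z = B (wD f z) (g z) + B (f z) (wD g z) := by
  have hfderiv (v : ℂ) : fderiv ℝ (fun w ↦ B (f w) (g w)) z v =
      B (f z) (fderiv ℝ g z v) + B (fderiv ℝ f z v) (g z) :=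
    DFunLike.congr_fun ((B.bilinearRestrictScalars ℝ).fderiv_of_bilinear hf hg) v
  simp only [wD, hfderiv, map_smul, map_sub, smul_apply, sub_apply]
  module

theorem wD_smul {c : ℂ → ℂ} {f : ℂ → E} (hc : DifferentiableAt ℝ c z)
    (hf : DifferentiableAt ℝ f z) :
    wD (fun w ↦ c w • f w) z = wD c z • f z + c z • wD f z :=
  wD_of_bilinear (ContinuousLinearMap.lsmul ℂ ℂ) hc hf

theorem hasFDerivAt_conjLinear_comp {D : Type*} [NormedAddCommGroup D] [NormedSpace ℝ D]
    (L : E →L⋆[ℂ] F) {f : D → E} {f' : D →L[ℝ] E} {x : D} (hf : HasFDerivAt f f' x) :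
    HasFDerivAt (fun w ↦ L (f w)) (((L : E →+ F).toRealLinearMap L.continuous).comp f') x :=
  ((L : E →+ F).toRealLinearMap L.continuous).hasFDerivAt.comp x hf

theorem wD_conjLinear_comp_eq_zero (L : E →L⋆[ℂ] F) {f : ℂ → E} (hf : DifferentiableAt ℂ f z) :
    wD (fun w ↦ L (f w)) z = 0 := by
  have hfderiv (v : ℂ) : fderiv ℝ (fun w ↦ L (f w)) z v = L (v • deriv f z) := by
    rw [(hasFDerivAt_conjLinear_comp L (hf.hasDerivAt.hasFDerivAt.restrictScalars ℝ)).fderiv]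
    rfl
  simp [wD, hfderiv, smul_smul]

theorem wD_of_sesquilinear (S : E →L⋆[ℂ] F →L[ℂ] G) {f : ℂ → E} {g : ℂ → F}
    (hf : DifferentiableAt ℂ f z) (hg : DifferentiableAt ℝ g z) :
    wD (fun w ↦ S (f w) (g w)) z = S (f z) (wD g z) := by
  have hSf := (hasFDerivAt_conjLinear_comp S
    (hf.hasFDerivAt.restrictScalars ℝ)).differentiableAt
  have hprod := wD_of_bilinear (ContinuousLinearMap.id ℂ (F →L[ℂ] G)) hSf hg
  simpa [wD_conjLinear_comp_eq_zero S hf] using hprod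

end Wirtinger

section SpanSingleton

variable {𝕜 E : Type*} [RCLike 𝕜] [NormedAddCommGroup E] [InnerProductSpace 𝕜 E]

theorem starProjection_span_singleton_eq_rankOne (v : E) :
    (𝕜 ∙ v).starProjection = InnerProductSpace.rankOne 𝕜 ((⟪v, v⟫_𝕜)⁻¹ • v) v := by
  ext w
  simp [Submodule.starProjection_singleton, inner_self_eq_norm_sq_to_K, smul_smul, div_eq_mul_inv,
    mul_comm]

theorem norm_sq_starProjection_orthogonal_span_singleton (v w : E) :
    ‖(𝕜 ∙ v)ᗮ.starProjection w‖ ^ 2 = ‖w‖ ^ 2 - ‖⟪v, w⟫_𝕜‖ ^ 2 / ‖v‖ ^ 2 := by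
  have hpyth := (𝕜 ∙ v).norm_sq_eq_add_norm_sq_starProjection w
  have hproj : ‖(𝕜 ∙ v).starProjection w‖ ^ 2 = ‖⟪v, w⟫_𝕜‖ ^ 2 / ‖v‖ ^ 2 := by
    rw [Submodule.starProjection_singleton, norm_smul, norm_div, RCLike.norm_ofReal,
      abs_of_nonneg (sq_nonneg _)]
    rcases eq_or_ne v 0 with rfl | hv
    · simp
    · have hv' : ‖v‖ ≠ 0 := norm_ne_zero_iff.mpr hv
      field_simp
  linarith

end SpanSingleton

section Projection

variable {E : Type*} [NormedAddCommGroup E] [InnerProductSpace ℂ E] {f : ℂ → E} {z : ℂ}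

theorem wD_inv_inner_self_smul (hf : DifferentiableAt ℂ f z) (h0 : f z ≠ 0) :
    wD (fun w ↦ (⟪f w, f w⟫_ℂ)⁻¹ • f w) z =
      (⟪f z, f z⟫_ℂ)⁻¹ • (ℂ ∙ f z)ᗮ.starProjection (wD f z) := by
  have hfR : DifferentiableAt ℝ f z := hf.restrictScalars ℝ
  have hN : DifferentiableAt ℝ (fun w ↦ ⟪f w, f w⟫_ℂ) z := hfR.inner ℂ hfR
  have hN0 : ⟪f z, f z⟫_ℂ ≠ 0 := inner_self_ne_zero.mpr h0
  have hwDN : wD (fun w ↦ ⟪f w, f w⟫_ℂ) z = ⟪f z, wD f z⟫_ℂ :=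
    wD_of_sesquilinear (innerSL ℂ) hf hfR
  have hinv : DifferentiableAt ℝ (fun w ↦ (⟪f w, f w⟫_ℂ)⁻¹) z := hN.inv hN0
  rw [wD_smul hinv hfR, wD_inv hN hN0, hwDN, Submodule.starProjection_orthogonal_val,
    starProjection_span_singleton_eq_rankOne, InnerProductSpace.rankOne_apply]
  module

theorem wD_starProjection_span_singleton (hf : DifferentiableAt ℂ f z) (h0 : f z ≠ 0) :
    wD (fun w ↦ (ℂ ∙ f w).starProjection) z =
      InnerProductSpace.rankOne ℂ
        ((⟪f z, f z⟫_ℂ)⁻¹ • (ℂ ∙ f z)ᗮ.starProjection (wD f z)) (f z) := by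
  have hfR : DifferentiableAt ℝ f z := hf.restrictScalars ℝ
  have hu : DifferentiableAt ℝ (fun w ↦ (⟪f w, f w⟫_ℂ)⁻¹ • f w) z :=
    ((hfR.inner ℂ hfR).inv (inner_self_ne_zero.mpr h0)).smul hfR
  have hrankOne : (fun w ↦ (ℂ ∙ f w).starProjection) =
      fun w ↦ InnerProductSpace.rankOne ℂ ((⟪f w, f w⟫_ℂ)⁻¹ • f w) (f w) :=
    funext fun w ↦ starProjection_span_singleton_eq_rankOne (f w)
  rw [hrankOne, ← wD_inv_inner_self_smul hf h0]
  have hsesq := wD_of_sesquilinear (InnerProductSpace.rankOne ℂ (E := E) (F := E)).flip hf hu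
  simpa only [ContinuousLinearMap.flip_apply] using hsesq

theorem stmt12_general (hf : DifferentiableAt ℂ f z) (h0 : f z ≠ 0) :
    ‖wD (fun w ↦ (ℂ ∙ f w).starProjection) z‖ ^ 2 =
      (‖f z‖ ^ 2 * ‖wD f z‖ ^ 2 - ‖⟪f z, wD f z⟫_ℂ‖ ^ 2) / ‖f z‖ ^ 4 := by
  have hfz : ‖f z‖ ≠ 0 := norm_ne_zero_iff.mpr h0
  have hN : ‖⟪f z, f z⟫_ℂ‖ = ‖f z‖ ^ 2 := by simp [inner_self_eq_norm_sq_to_K]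
  rw [wD_starProjection_span_singleton hf h0, InnerProductSpace.norm_rankOne, norm_smul, norm_inv,
    hN, mul_pow, mul_pow, norm_sq_starProjection_orthogonal_span_singleton]
  field_simp

end Projection

/-- with `Π(z)` the orthogonal projection onto `span{f(z)}`,
`‖∂Π(z)‖² = (‖f‖²‖f'‖² − |⟨f',f⟩|²)/‖f‖⁴`. -/
theorem stmt12 {E : Type*} [NormedAddCommGroup E] [InnerProductSpace ℂ E] [CompleteSpace E]
    (f : ℂ → E) (hf : DifferentiableOn ℂ f (Metric.ball 0 1))
    (hne : ∀ z ∈ Metric.ball (0:ℂ) 1, f z ≠ 0)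
    (P : ℂ → E →L[ℂ] E)
    (hP : ∀ z, P z = (‖f z‖^2)⁻¹ • (innerSL ℂ (f z)).smulRight (f z)) :
    ∀ z ∈ Metric.ball (0:ℂ) 1,
      ‖wD P z‖^2 =
        (‖f z‖^2 * ‖wD f z‖^2 - ‖⟪f z, wD f z⟫_ℂ‖^2) / ‖f z‖^4 := by
  intro z hz
  obtain rfl : P = fun w ↦ (ℂ ∙ f w).starProjection := by
    ext w v
    simp [hP, Submodule.starProjection_singleton, div_eq_inv_mul, mul_smul, ← Complex.coe_smul]
  exact stmt12_general (hf.differentiableAt (Metric.isOpen_ball.mem_nhds hz)) (hne z hz)
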